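/- arXiv:2110.14798 — 8 statements merged into one kernel-verified Lean document; each statement's English description precedes it below -/
import Mathlib

section
/- Consider a finite-horizon MDP, feature maps φ_h : S × A → ℝ^d for h ∈ {1,…,H}, an optimal policy π* with π*_h(s) ∈ argmax_a Q*_h(s,a), a policy π, functions Q̄_h : S × A → ℝ for h ∈ {1,…,H} with V̄_h(s) := max_{a∈A} Q̄_h(s,a) and V̄_{H+1} ≡ 0, symmetric positive definite matrices Λ_h ∈ ℝ^{d×d}, a scalar β ≥ 0, and constants C_h ≥ 0. Assume: (a) π is greedy with respect to Q̄: π_h(s) ∈ argmax_{a∈A} Q̄_h(s,a) for all s, h; (b) global optimism: V̄_1(s) ≥ V*_1(s) for all s; (c) almost local optimism: Q̄_h(s,a) + C_h β ‖φ_h(s,a)‖_{Λ_h^{-1}} ≥ Q*_h(s,a) for all h ∈ {2,…,H}, s ∈ S, a ∈ A; (d) for all h ∈ {1,…,H} and all s ∈ S, V̄_h(s) − V^π_h(s) ≤ 2β ‖φ_h(s, π_h(s))‖_{Λ_h^{-1}} + Σ_{s'∈S} p_h(s'|s, π_h(s)) (V̄_{h+1}(s') − V^π_{h+1}(s')). Then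 for every h ∈ {1,…,H} and every s ∈ S: Δ_h(s, π_h(s)) ≤ 2 E_π[ Σ_{i=h}^{H} β ‖φ_i(s_i, a_i)‖_{Λ_i^{-1}} | s_h = s ] + 1{h > 1} · C_h β ‖φ_h(s, π*_h(s))‖_{Λ_h^{-1}}. -/
/-!
STATEMENT 1: gap bound for an optimistic greedy algorithm (combined lemma for
ELEANOR / LSVI-UCB): under greediness, global optimism, almost local optimism
and the confidence-set property, for every stage `h ∈ [1,H]` and state `s`,
`Δ_h(s, π_h(s)) ≤ 2 E_π[Σ_{i=h}^H β‖φ_i(s_i,a_i)‖_{Λ_i⁻¹} | s_h = s]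
  + 1{h>1} C_h β ‖φ_h(s, π*_h(s))‖_{Λ_h⁻¹}`.
-/

open Finset Matrix

variable {S A : Type*}

section MDP
variable [Fintype S] [Fintype A] [Nonempty A]

/-- Optimal value function by backward induction (fuel `H + 1 - h`). -/
noncomputable def VstarAux (r : ℕ → S → A → ℝ) (p : ℕ → S → A → S → ℝ) :
    ℕ → ℕ → S → ℝ
  | 0, _, _ => 0
  | t + 1, h, s =>
      Finset.univ.sup' Finset.univ_nonempty fun a : A =>
        r h s a + ∑ s' : S, p h s a s' * VstarAux r p t (h + 1) s'

noncomputable def Vstar (H : ℕ) (r : ℕ → S → A → ℝ) (p : ℕ → S → A → S → ℝ)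
    (h : ℕ) (s : S) : ℝ :=
  VstarAux r p (H + 1 - h) h s

noncomputable def Qstar (H : ℕ) (r : ℕ → S → A → ℝ) (p : ℕ → S → A → S → ℝ)
    (h : ℕ) (s : S) (a : A) : ℝ :=
  r h s a + ∑ s' : S, p h s a s' * Vstar H r p (h + 1) s'

/-- Suboptimality gap `Δ_h(s,a) = V*_h(s) − Q*_h(s,a)`. -/
noncomputable def gap (H : ℕ) (r : ℕ → S → A → ℝ) (p : ℕ → S → A → S → ℝ)
    (h : ℕ) (s : S) (a : A) : ℝ :=
  Vstar H r p h s - Qstar H r p h s a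

/-- Value function of a deterministic policy (fuel `H + 1 - h`). -/
noncomputable def VpiAux (r : ℕ → S → A → ℝ) (p : ℕ → S → A → S → ℝ)
    (π : ℕ → S → A) : ℕ → ℕ → S → ℝ
  | 0, _, _ => 0
  | t + 1, h, s =>
      r h s (π h s) + ∑ s' : S, p h s (π h s) s' * VpiAux r p π t (h + 1) s'

noncomputable def Vpi (H : ℕ) (r : ℕ → S → A → ℝ) (p : ℕ → S → A → S → ℝ)
    (π : ℕ → S → A) (h : ℕ) (s : S) : ℝ :=
  VpiAux r p π (H + 1 - h) h s

/-- `cumulAux p π g t h s = E_π[ Σ_{i=h}^{h+t-1} g_i(s_i) | s_h = s ]`. -/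
noncomputable def cumulAux (p : ℕ → S → A → S → ℝ) (π : ℕ → S → A)
    (g : ℕ → S → ℝ) : ℕ → ℕ → S → ℝ
  | 0, _, _ => 0
  | t + 1, h, s =>
      g h s + ∑ s' : S, p h s (π h s) s' * cumulAux p π g t (h + 1) s'

/-- `cumul H p π g h s = E_π[ Σ_{i=h}^H g_i(s_i) | s_h = s ]`. -/
noncomputable def cumul (H : ℕ) (p : ℕ → S → A → S → ℝ) (π : ℕ → S → A)
    (g : ℕ → S → ℝ) (h : ℕ) (s : S) : ℝ :=
  cumulAux p π g (H + 1 - h) h s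

end MDP

/-- The weighted norm `‖x‖_M = √(xᵀ M x)`. -/
noncomputable def matNorm {d : ℕ} (M : Matrix (Fin d) (Fin d) ℝ) (x : Fin d → ℝ) : ℝ :=
  Real.sqrt (x ⬝ᵥ M.mulVec x)

theorem stmt1
    {S A : Type*} [Fintype S] [Fintype A] [Nonempty A] {d : ℕ}
    (H : ℕ) (hH : 1 ≤ H)
    (r : ℕ → S → A → ℝ) (p : ℕ → S → A → S → ℝ)
    (hp0 : ∀ h s a s', 0 ≤ p h s a s') (hp1 : ∀ h s a, ∑ s' : S, p h s a s' = 1)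
    -- feature maps
    (φ : ℕ → S → A → Fin d → ℝ)
    -- an optimal policy: `π*_h(s)` attains the maximum of `Q*_h(s,·)`
    (πstar : ℕ → S → A)
    (hπstar : ∀ h, 1 ≤ h → h ≤ H → ∀ s, Qstar H r p h s (πstar h s) = Vstar H r p h s)
    -- the algorithm's policy and optimistic estimates
    (π : ℕ → S → A)
    (Qbar : ℕ → S → A → ℝ) (Vbar : ℕ → S → ℝ)
    (hVbar : ∀ h, 1 ≤ h → h ≤ H → ∀ s,
        Vbar h s = Finset.univ.sup' Finset.univ_nonempty fun a => Qbar h s a)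
    (hVbarEnd : ∀ s, Vbar (H + 1) s = 0)
    -- symmetric positive definite matrices, scalar β ≥ 0, constants C_h ≥ 0
    (Λ : ℕ → Matrix (Fin d) (Fin d) ℝ) (hΛ : ∀ h, (Λ h).PosDef)
    (β : ℝ) (hβ : 0 ≤ β) (C : ℕ → ℝ) (hC : ∀ h, 0 ≤ C h)
    -- (a) greediness w.r.t. Q̄
    (hgreedy : ∀ h, 1 ≤ h → h ≤ H → ∀ s a, Qbar h s a ≤ Qbar h s (π h s))
    -- (b) global optimism
    (hglobal : ∀ s, Vstar H r p 1 s ≤ Vbar 1 s)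
    -- (c) almost local optimism
    (hlocal : ∀ h, 2 ≤ h → h ≤ H → ∀ s a,
        Qstar H r p h s a ≤ Qbar h s a + C h * β * matNorm (Λ h)⁻¹ (φ h s a))
    -- (d) confidence-set property
    (hconf : ∀ h, 1 ≤ h → h ≤ H → ∀ s : S,
        Vbar h s - Vpi H r p π h s
          ≤ 2 * β * matNorm (Λ h)⁻¹ (φ h s (π h s))
            + ∑ s' : S, p h s (π h s) s' * (Vbar (h + 1) s' - Vpi H r p π (h + 1) s')) :
    ∀ h, 1 ≤ h → h ≤ H → ∀ s : S,
      gap H r p h s (π h s)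
        ≤ 2 * cumul H p π (fun i s' => β * matNorm (Λ i)⁻¹ (φ i s' (π i s'))) h s
          + (if 1 < h then C h * β * matNorm (Λ h)⁻¹ (φ h s (πstar h s)) else 0) := by
  have hVle : ∀ t h s, VpiAux r p π t h s ≤ VstarAux r p t h s := by
    intro t
    induction t with
    | zero => intro h s; simp [VpiAux, VstarAux]
    | succ t ih =>
      intro h s
      rw [VpiAux, VstarAux]
      refine le_trans ?_ (Finset.le_sup' (fun a : A =>
        r h s a + ∑ s' : S, p h s a s' * VstarAux r p t (h + 1) s') (Finset.mem_univ (π h s)))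
      have := Finset.sum_le_sum (fun s' (_ : s' ∈ (Finset.univ : Finset S)) =>
        mul_le_mul_of_nonneg_left (ih (h + 1) s') (hp0 h s (π h s) s'))
      simpa using this
  have hbound : ∀ t h, 1 ≤ h → h + t = H + 1 → ∀ s,
      Vbar h s - Vpi H r p π h s ≤
        2 * cumulAux p π (fun i s' => β * matNorm (Λ i)⁻¹ (φ i s' (π i s'))) t h s := by
    intro t
    induction t with
    | zero =>
      intro h h1 ht s
      obtain rfl : h = H + 1 := by omega
      simp [hVbarEnd, Vpi, VpiAux, cumulAux]
    | succ t ih =>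
      intro h h1 ht s
      refine (hconf h h1 (by omega) s).trans ?_
      rw [cumulAux, mul_add, Finset.mul_sum]
      have := Finset.sum_le_sum (fun s' (_ : s' ∈ (Finset.univ : Finset S)) =>
        mul_le_mul_of_nonneg_left (ih (h + 1) (by omega) (by omega) s') (hp0 h s (π h s) s'))
      have e : ∀ s', p h s (π h s) s' * (2 * cumulAux p π
          (fun i s' => β * matNorm (Λ i)⁻¹ (φ i s' (π i s'))) t (h + 1) s') =
          2 * (p h s (π h s) s' * cumulAux p π
          (fun i s' => β * matNorm (Λ i)⁻¹ (φ i s' (π i s'))) t (h + 1) s') := by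
        intro s'; ring
      simp only [e] at this
      linarith
  intro h h1 hH' s
  have hb := hbound (H + 1 - h) h h1 (by omega) s
  have hq : Vpi H r p π h s ≤ Qstar H r p h s (π h s) := by
    have e1 : H + 1 - h = (H + 1 - (h + 1)) + 1 := by omega
    unfold Vpi Qstar Vstar
    rw [e1, VpiAux]
    have := Finset.sum_le_sum (fun s' (_ : s' ∈ (Finset.univ : Finset S)) =>
      mul_le_mul_of_nonneg_left (hVle (H + 1 - (h + 1)) (h + 1) s') (hp0 h s (π h s) s'))
    simpa using this
  have ho : Vstar H r p h s ≤ Vbar h s +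
      (if 1 < h then C h * β * matNorm (Λ h)⁻¹ (φ h s (πstar h s)) else 0) := by
    split_ifs with hh
    · rw [← hπstar h h1 hH' s]
      have h2 := hlocal h hh hH' s (πstar h s)
      have h3 : Qbar h s (πstar h s) ≤ Vbar h s := by
        rw [hVbar h h1 hH' s]
        exact Finset.le_sup' (fun a => Qbar h s a) (Finset.mem_univ _)
      linarith
    · obtain rfl : h = 1 := by omega
      simpa using hglobal s
  unfold gap cumul
  linarith
end

section
/- Let {φ_j}_{j∈[n]} be a finite set of vectors in ℝ^d and let v ∈ ℝ^d be such that v does not belong to the linear span of {φ_j : j ∈ [n]}. Then there exists a scalar ε > 0 such that for every t ≥ 0 and every η > 0, ‖v‖_{(t Σ_{j∈[n]} φ_j φ_jᵀ + η I_d)^{-1}} ≥ ε / √η. -/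
/-!
STATEMENT 3: if `v` is not in the span of the vectors `φ_j`, then there is an
`ε > 0` such that for all `t ≥ 0` and `η > 0`,
`‖v‖_{(t Σ_j φ_j φ_jᵀ + η I)⁻¹} ≥ ε / √η`.
-/

open Matrix

theorem stmt3 {d n : ℕ} (φ : Fin n → Fin d → ℝ) (v : Fin d → ℝ)
    (hv : v ∉ Submodule.span ℝ (Set.range φ)) :
    ∃ ε : ℝ, 0 < ε ∧ ∀ t : ℝ, 0 ≤ t → ∀ η : ℝ, 0 < η →
      ε / Real.sqrt η
        ≤ matNorm
            (t • (∑ j : Fin n, Matrix.vecMulVec (φ j) (φ j))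
              + η • (1 : Matrix (Fin d) (Fin d) ℝ))⁻¹ v := by
  obtain ⟨f, hfv, hf⟩ := Submodule.exists_le_ker_of_notMem hv
  set w : Fin d → ℝ := fun i => f (fun j => if i = j then 1 else 0) with hw
  have hfw : ∀ x, f x = x ⬝ᵥ w := by
    intro x
    rw [LinearMap.pi_apply_eq_sum_univ f x]
    rfl
  have hφ : ∀ j, φ j ⬝ᵥ w = 0 := by
    intro j
    rw [← hfw]
    exact hf (Submodule.subset_span ⟨j, rfl⟩)
  rw [hfw] at hfv
  have hw0 : w ≠ 0 := by
    intro h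
    apply hfv
    rw [h, dotProduct_zero]
  have hww : 0 < w ⬝ᵥ w := by
    have h0 : 0 ≤ w ⬝ᵥ w := Finset.sum_nonneg fun i _ => mul_self_nonneg _
    exact lt_of_le_of_ne h0 fun h => hw0 (dotProduct_self_eq_zero.1 h.symm)
  refine ⟨|v ⬝ᵥ w| / Real.sqrt (w ⬝ᵥ w),
    div_pos (abs_pos.2 hfv) (Real.sqrt_pos.2 hww), ?_⟩
  intro t ht η hη
  set A := t • (∑ j : Fin n, Matrix.vecMulVec (φ j) (φ j))
              + η • (1 : Matrix (Fin d) (Fin d) ℝ) with hA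
  have hmul : ∀ x y, A *ᵥ x ⬝ᵥ y = t * ∑ j, (φ j ⬝ᵥ x) * (φ j ⬝ᵥ y) + η * (x ⬝ᵥ y) := by
    intro x y
    rw [hA, Matrix.add_mulVec, Matrix.smul_mulVec, Matrix.smul_mulVec, Matrix.one_mulVec,
      Matrix.sum_mulVec, add_dotProduct, smul_dotProduct, smul_dotProduct, sum_dotProduct]
    simp [Matrix.vecMulVec_mulVec, smul_dotProduct]
  have hge : ∀ x, η * (x ⬝ᵥ x) ≤ A *ᵥ x ⬝ᵥ x := by
    intro x
    rw [hmul]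
    have : 0 ≤ t * ∑ j, (φ j ⬝ᵥ x) * (φ j ⬝ᵥ x) :=
      mul_nonneg ht (Finset.sum_nonneg fun i _ => mul_self_nonneg _)
    linarith
  have hunit : IsUnit A := by
    rw [← Matrix.mulVec_injective_iff_isUnit]
    intro x y hxy
    have h1 : A *ᵥ (x - y) = 0 := by
      rw [Matrix.mulVec_sub]; exact sub_eq_zero.2 hxy
    have h2 := hge (x - y)
    rw [h1, zero_dotProduct] at h2
    have h3 : 0 ≤ (x - y) ⬝ᵥ (x - y) := Finset.sum_nonneg fun i _ => mul_self_nonneg _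
    have h4 : (x - y) ⬝ᵥ (x - y) = 0 := by nlinarith
    exact sub_eq_zero.1 (dotProduct_self_eq_zero.1 h4)
  set u := A⁻¹ *ᵥ v with hu
  have hAu : A *ᵥ u = v := by
    rw [hu, Matrix.mulVec_mulVec, Matrix.mul_nonsing_inv _ ((Matrix.isUnit_iff_isUnit_det A).1 hunit),
      Matrix.one_mulVec]
  have hvw : v ⬝ᵥ w = η * (u ⬝ᵥ w) := by
    have := hmul u w
    rw [hAu] at this
    simpa [hφ] using this
  have hvu : η * (u ⬝ᵥ u) ≤ v ⬝ᵥ u := by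
    have := hge u
    rwa [hAu] at this
  have hcs : (u ⬝ᵥ w) ^ 2 ≤ (u ⬝ᵥ u) * (w ⬝ᵥ w) := by
    have := Finset.sum_mul_sq_le_sq_mul_sq Finset.univ u w
    simpa [dotProduct, sq] using this
  unfold matNorm
  rw [← hu]
  apply Real.le_sqrt_of_sq_le
  rw [div_pow, div_pow, Real.sq_sqrt hww.le, Real.sq_sqrt hη.le, sq_abs, hvw, div_div,
    div_le_iff₀ (by positivity)]
  calc (η * (u ⬝ᵥ w)) ^ 2 = η ^ 2 * (u ⬝ᵥ w) ^ 2 := by ring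
    _ ≤ η ^ 2 * ((u ⬝ᵥ u) * (w ⬝ᵥ w)) := by gcongr
    _ = (η * (u ⬝ᵥ u)) * (w ⬝ᵥ w * η) := by ring
    _ ≤ _ := by gcongr
end

section
/- Consider a finite-horizon MDP in which the optimal action is unique at every state (|argmax_a Q*_h(s,a)| = 1 for all s, h), with unique optimal policy π* given by π*_h(s) = argmax_a Q*_h(s,a), and feature maps φ_h : S × A → ℝ^d. Fix a stage h ∈ {1,…,H} and let W = span{ φ_h(s', π*_h(s')) : s' ∈ S, ρ^{π*}_h(s') > 0 }. Suppose there exists a state s with ρ^{π*}_h(s) > 0 and an action a ≠ π*_h(s) with φ_h(s,a) ∉ W. Define the policy π to agree with π* everywhere except that π_h(s) = a. Then: (i) Ψ_h^π − Ψ_h^{π*} = ρ^{π*}_h(s) ( φ_h(s,a) − φ_h(s, π*_h(s)) ), hence Ψ_h^π ∉ W; and (ii) π is strictly suboptimal: E_{s₁∼μ}[ V*_1(s₁) − V^π_1(s₁) ] ≥ ρ^{π*}_h(s) Δ_h(s,a) > 0. -/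
/-!
STATEMENT 4: in an MDP with unique optimal actions, if a reachable pair `(s,a)`
at stage `h` (with `ρ*_h(s) > 0`, `a ≠ π*_h(s)`) has features outside the span
`W` of optimal features, then the policy `π` obtained from `π*` by switching to
`a` at `(h,s)` satisfies
(i) `Ψ_h^π − Ψ_h^{π*} = ρ*_h(s) (φ_h(s,a) − φ_h(s,π*_h(s)))`, hence `Ψ_h^π ∉ W`;
(ii) `E_{s₁∼μ}[V*_1(s₁) − V^π_1(s₁)] ≥ ρ*_h(s) Δ_h(s,a) > 0`.
-/

open Finset Matrix

variable {S A : Type*}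

section MDP
variable [Fintype S] [Fintype A] [Nonempty A]

/-- Occupancy measure: `occAux p π μ t` is the state distribution at stage `t + 1`
under policy `π` with initial distribution `μ`. -/
noncomputable def occAux (p : ℕ → S → A → S → ℝ) (π : ℕ → S → A) (μ : S → ℝ) :
    ℕ → S → ℝ
  | 0 => μ
  | t + 1 => fun s' => ∑ s : S, occAux p π μ t s * p (t + 1) s (π (t + 1) s) s'

/-- `occ p π μ h s = ρ^π_h(s) = P_π(s_h = s)` for `1 ≤ h`. -/
noncomputable def occ (p : ℕ → S → A → S → ℝ) (π : ℕ → S → A) (μ : S → ℝ)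
    (h : ℕ) (s : S) : ℝ :=
  occAux p π μ (h - 1) s

/-- Expected feature vector `Ψ^π_h = Σ_{(s,a)} ρ^π_h(s,a) φ_h(s,a)`
(`ρ^π_h(s,a) = ρ^π_h(s) 1{π_h(s) = a}`). -/
noncomputable def Psi {d : ℕ} (φ : ℕ → S → A → Fin d → ℝ)
    (p : ℕ → S → A → S → ℝ) (π : ℕ → S → A) (μ : S → ℝ) (h : ℕ) : Fin d → ℝ :=
  ∑ s : S, occ p π μ h s • φ h s (π h s)

end MDP

section Helpers
variable [Fintype S] [Fintype A] [Nonempty A]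

theorem Qstar_le_Vstar (H : ℕ) (r : ℕ → S → A → ℝ) (p : ℕ → S → A → S → ℝ)
    (h : ℕ) (hh : h ≤ H) (s : S) (a : A) :
    Qstar H r p h s a ≤ Vstar H r p h s := by
  unfold Qstar Vstar
  have e1 : H + 1 - h = (H - h) + 1 := by omega
  have e2 : H + 1 - (h + 1) = H - h := by omega
  rw [e1, e2, VstarAux]
  exact Finset.le_sup' (fun a : A =>
        r h s a + ∑ s' : S, p h s a s' * VstarAux r p (H - h) (h + 1) s') (Finset.mem_univ a)

theorem Vpi_step (H : ℕ) (r : ℕ → S → A → ℝ) (p : ℕ → S → A → S → ℝ) (π : ℕ → S → A)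
    (h : ℕ) (hh : h ≤ H) (s : S) :
    Vpi H r p π h s =
      r h s (π h s) + ∑ s' : S, p h s (π h s) s' * Vpi H r p π (h + 1) s' := by
  unfold Vpi
  have e1 : H + 1 - h = (H - h) + 1 := by omega
  have e2 : H + 1 - (h + 1) = H - h := by omega
  rw [e1, e2, VpiAux]

theorem VpiAux_le (r : ℕ → S → A → ℝ) (p : ℕ → S → A → S → ℝ)
    (hp0 : ∀ h s a s', 0 ≤ p h s a s') (π : ℕ → S → A) (t : ℕ) :
    ∀ h s, VpiAux r p π t h s ≤ VstarAux r p t h s := by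
  induction t with
  | zero => intro h s; simp [VpiAux, VstarAux]
  | succ t ih =>
    intro h s
    rw [VpiAux, VstarAux]
    refine le_trans ?_ (Finset.le_sup' (fun a : A =>
        r h s a + ∑ s' : S, p h s a s' * VstarAux r p t (h + 1) s') (Finset.mem_univ (π h s)))
    have := Finset.sum_le_sum (s := Finset.univ) fun s' _ =>
      mul_le_mul_of_nonneg_left (ih (h + 1) s') (hp0 h s (π h s) s')
    simpa using this

theorem occAux_nonneg (p : ℕ → S → A → S → ℝ)
    (hp0 : ∀ h s a s', 0 ≤ p h s a s') (π : ℕ → S → A) (μ : S → ℝ) (hμ0 : ∀ s, 0 ≤ μ s)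
    (t : ℕ) : ∀ s, 0 ≤ occAux p π μ t s := by
  induction t with
  | zero => exact hμ0
  | succ t ih =>
    intro s
    exact Finset.sum_nonneg fun s' _ => mul_nonneg (ih s') (hp0 _ _ _ _)

theorem occAux_congr (p : ℕ → S → A → S → ℝ) (π π' : ℕ → S → A) (μ : S → ℝ) (t : ℕ)
    (hc : ∀ i, i ≤ t → π i = π' i) : occAux p π μ t = occAux p π' μ t := by
  induction t with
  | zero => rfl
  | succ t ih =>
    rw [occAux, occAux, ih fun i hi => hc i (by omega), hc (t + 1) le_rfl]

theorem diff_step (H : ℕ) (r : ℕ → S → A → ℝ) (p : ℕ → S → A → S → ℝ) (π : ℕ → S → A)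
    (μ : S → ℝ) (t : ℕ) (ht : t + 1 ≤ H) :
    ∑ s, occAux p π μ t s * (Vstar H r p (t + 1) s - Vpi H r p π (t + 1) s) =
      ∑ s, occAux p π μ t s * gap H r p (t + 1) s (π (t + 1) s) +
      ∑ s, occAux p π μ (t + 1) s *
        (Vstar H r p (t + 1 + 1) s - Vpi H r p π (t + 1 + 1) s) := by
  have e : ∑ s, occAux p π μ (t + 1) s *
        (Vstar H r p (t + 1 + 1) s - Vpi H r p π (t + 1 + 1) s) =
      ∑ s, occAux p π μ t s * ∑ s', p (t + 1) s (π (t + 1) s) s' *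
        (Vstar H r p (t + 1 + 1) s' - Vpi H r p π (t + 1 + 1) s') := by
    simp only [occAux, Finset.sum_mul, Finset.mul_sum]
    rw [Finset.sum_comm]
    simp only [mul_assoc]
  rw [e, ← Finset.sum_add_distrib]
  refine Finset.sum_congr rfl fun s _ => ?_
  rw [Vpi_step H r p π (t + 1) ht, gap, Qstar]
  simp only [mul_sub, Finset.sum_sub_distrib]
  ring

theorem gap_nonneg (H : ℕ) (r : ℕ → S → A → ℝ) (p : ℕ → S → A → S → ℝ)
    (h : ℕ) (hh : h ≤ H) (s : S) (a : A) : 0 ≤ gap H r p h s a :=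
  sub_nonneg.2 (Qstar_le_Vstar H r p h hh s a)

theorem diff_antitone (H : ℕ) (r : ℕ → S → A → ℝ) (p : ℕ → S → A → S → ℝ) (π : ℕ → S → A)
    (hp0 : ∀ h s a s', 0 ≤ p h s a s') (μ : S → ℝ) (hμ0 : ∀ s, 0 ≤ μ s) (t : ℕ) (ht : t ≤ H) :
    ∑ s, occAux p π μ t s * (Vstar H r p (t + 1) s - Vpi H r p π (t + 1) s) ≤
      ∑ s, μ s * (Vstar H r p 1 s - Vpi H r p π 1 s) := by
  induction t with
  | zero => exact le_rfl
  | succ t ih =>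
    refine le_trans ?_ (ih (by omega))
    rw [diff_step H r p π μ t ht]
    have : 0 ≤ ∑ s, occAux p π μ t s * gap H r p (t + 1) s (π (t + 1) s) :=
      Finset.sum_nonneg fun s _ =>
        mul_nonneg (occAux_nonneg p hp0 π μ hμ0 t s) (gap_nonneg H r p _ ht _ _)
    linarith

end Helpers

theorem stmt4
    {S A : Type*} [Fintype S] [Fintype A] [Nonempty A] [DecidableEq S] {d : ℕ}
    (H : ℕ) (hH : 1 ≤ H)
    (r : ℕ → S → A → ℝ) (p : ℕ → S → A → S → ℝ)
    (hp0 : ∀ h s a s', 0 ≤ p h s a s') (hp1 : ∀ h s a, ∑ s' : S, p h s a s' = 1)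
    (μ : S → ℝ) (hμ0 : ∀ s, 0 ≤ μ s) (hμ1 : ∑ s : S, μ s = 1)
    (φ : ℕ → S → A → Fin d → ℝ)
    -- π* is the unique optimal policy: at every state the optimal action is
    -- unique and given by π*
    (πstar : ℕ → S → A)
    (hunique : ∀ h, 1 ≤ h → h ≤ H → ∀ s a, a ≠ πstar h s →
        Qstar H r p h s a < Qstar H r p h s (πstar h s))
    (h : ℕ) (hh1 : 1 ≤ h) (hhH : h ≤ H)
    (s : S) (hs : 0 < occ p πstar μ h s)
    (a : A) (ha : a ≠ πstar h s)
    (W : Submodule ℝ (Fin d → ℝ))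
    (hW : W = Submodule.span ℝ
        {x | ∃ s' : S, 0 < occ p πstar μ h s' ∧ x = φ h s' (πstar h s')})
    (hφ : φ h s a ∉ W)
    -- π agrees with π* everywhere except that π_h(s) = a
    (π : ℕ → S → A)
    (hπ : π = fun i s' => if i = h ∧ s' = s then a else πstar i s') :
    -- (i)
    ((Psi φ p π μ h - Psi φ p πstar μ h
        = occ p πstar μ h s • (φ h s a - φ h s (πstar h s)))
      ∧ Psi φ p π μ h ∉ W)
    -- (ii)
    ∧ (occ p πstar μ h s * gap H r p h s a
        ≤ ∑ s₁ : S, μ s₁ * (Vstar H r p 1 s₁ - Vpi H r p π 1 s₁)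
      ∧ 0 < occ p πstar μ h s * gap H r p h s a) := by
  obtain ⟨k, rfl⟩ : ∃ k, h = k + 1 := ⟨h - 1, by omega⟩
  have hocc : occAux p π μ k = occAux p πstar μ k := by
    apply occAux_congr
    intro i hi
    funext s'
    rw [hπ]
    have : i ≠ k + 1 := by omega
    simp [this]
  have hπs : π (k + 1) s = a := by simp [hπ]
  have hπo : ∀ s', s' ≠ s → π (k + 1) s' = πstar (k + 1) s' := by
    intro s' hs'
    simp [hπ, hs']
  have ho : ∀ s', occ p π μ (k + 1) s' = occ p πstar μ (k + 1) s' := by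
    intro s'
    simp [occ, hocc]
  have hnn : ∀ s', 0 ≤ occ p πstar μ (k + 1) s' :=
    fun s' => occAux_nonneg p hp0 πstar μ hμ0 _ s'
  have hgap : 0 < gap H r p (k + 1) s a :=
    sub_pos.2 ((hunique _ hh1 hhH s a ha).trans_le (Qstar_le_Vstar H r p _ hhH s _))
  have h1 : Psi φ p π μ (k + 1) - Psi φ p πstar μ (k + 1)
      = occ p πstar μ (k + 1) s • (φ (k + 1) s a - φ (k + 1) s (πstar (k + 1) s)) := by
    unfold Psi
    rw [← Finset.sum_sub_distrib, Finset.sum_eq_single s]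
    · rw [ho, hπs, smul_sub]
    · intro s' _ hs'
      rw [ho, hπo s' hs', sub_self]
    · intro hn
      exact absurd (Finset.mem_univ s) hn
  have hmem : ∀ s', 0 < occ p πstar μ (k + 1) s' → φ (k + 1) s' (πstar (k + 1) s') ∈ W := by
    intro s' hs'
    rw [hW]
    exact Submodule.subset_span ⟨s', hs', rfl⟩
  have hPs : Psi φ p πstar μ (k + 1) ∈ W := by
    refine Submodule.sum_mem _ fun s' _ => ?_
    rcases (hnn s').eq_or_lt with h0 | h0
    · rw [← h0, zero_smul]
      exact W.zero_mem
    · exact W.smul_mem _ (hmem s' h0)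
  refine ⟨⟨h1, fun hc => hφ ?_⟩, ?_, mul_pos hs hgap⟩
  · have h2 := W.sub_mem hc hPs
    rw [h1, W.smul_mem_iff hs.ne'] at h2
    have h3 := W.add_mem h2 (hmem s hs)
    simpa using h3
  · refine le_trans ?_ (diff_antitone H r p π hp0 μ hμ0 k (by omega))
    rw [diff_step H r p π μ k hhH]
    have hA : occ p πstar μ (k + 1) s * gap H r p (k + 1) s a ≤
        ∑ s, occAux p π μ k s * gap H r p (k + 1) s (π (k + 1) s) := by
      have := Finset.single_le_sum
        (f := fun s => occAux p π μ k s * gap H r p (k + 1) s (π (k + 1) s))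
        (fun s' _ => mul_nonneg (occAux_nonneg p hp0 π μ hμ0 k s')
          (gap_nonneg H r p _ hhH _ _)) (Finset.mem_univ s)
      simp only [hπs, hocc] at this
      rw [hocc]
      exact this
    have hB : 0 ≤ ∑ s, occAux p π μ (k + 1) s *
        (Vstar H r p (k + 1 + 1) s - Vpi H r p π (k + 1 + 1) s) :=
      Finset.sum_nonneg fun s' _ => mul_nonneg (occAux_nonneg p hp0 π μ hμ0 _ s')
        (sub_nonneg.2 (VpiAux_le r p hp0 π _ _ _))
    linarith
end

section
/- Consider a finite-horizon MDP in which the optimal action is unique at every state (|argmax_a Q*_h(s,a)| = 1 for all s, h), with unique optimal policy π* given by π*_h(s) = argmax_a Q*_h(s,a), and whose minimum positive gap Δ_min = min{Δ_h(s,a) : Δ_h(s,a) > 0} is well defined (some gap is positive). Then for every deterministic policy π and every h ∈ {1,…,H}, the probability (over trajectories with s₁ ∼ μ and actions a_j = π_j(s_j)) that the policy deviates from π* within the first h steps satisfies P_π( ∃ j ∈ {1,…,h} : a_j ≠ π*_j(s_j) ) ≤ (1/Δ_min) · E_{s₁∼μ}[ V*_1(s₁) − V^π_1(s₁) ]. 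-/
/-!
STATEMENT 5: in an MDP with a unique optimal policy `π*` and well-defined
minimum positive gap `Δ_min`, for every policy `π` and every `h ∈ [1,H]`,
`P_π(∃ j ∈ [1,h] : a_j ≠ π*_j(s_j)) ≤ (1/Δ_min) E_{s₁∼μ}[V*_1(s₁) − V^π_1(s₁)]`.
-/

open Finset

variable {S A : Type*}

section MDP
variable [Fintype S] [Fintype A] [Nonempty A]

/-- `devAux p π πstar t j s` is the probability, starting from `s_j = s` and
following `π`, that the action taken at some stage `i ∈ [j, j + t - 1]` differs
from `π*_i(s_i)`.  (Once a deviation occurs, it has occurred; otherwise the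
trajectory continues one step.) -/
noncomputable def devAux [DecidableEq A] (p : ℕ → S → A → S → ℝ)
    (π πstar : ℕ → S → A) : ℕ → ℕ → S → ℝ
  | 0, _, _ => 0
  | t + 1, j, s =>
      if π j s ≠ πstar j s then 1
      else ∑ s' : S, p j s (π j s) s' * devAux p π πstar t (j + 1) s'

end MDP

theorem VstarAux_ge {S A : Type*} [Fintype S] [Fintype A] [Nonempty A]
    (r : ℕ → S → A → ℝ) (p : ℕ → S → A → S → ℝ) (t h : ℕ) (s : S) (a : A) :
    r h s a + ∑ s' : S, p h s a s' * VstarAux r p t (h + 1) s' ≤ VstarAux r p (t + 1) h s := by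
  rw [VstarAux]
  exact Finset.le_sup' (fun a : A =>
    r h s a + ∑ s' : S, p h s a s' * VstarAux r p t (h + 1) s') (Finset.mem_univ a)

theorem VpiAux_le_VstarAux {S A : Type*} [Fintype S] [Fintype A] [Nonempty A]
    (r : ℕ → S → A → ℝ) (p : ℕ → S → A → S → ℝ)
    (hp0 : ∀ h s a s', 0 ≤ p h s a s') (π : ℕ → S → A) (t : ℕ) :
    ∀ h s, VpiAux r p π t h s ≤ VstarAux r p t h s := by
  induction t with
  | zero => intro h s; simp [VpiAux, VstarAux]
  | succ t ih =>
    intro h s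
    refine le_trans ?_ (VstarAux_ge r p t h s (π h s))
    rw [VpiAux]
    gcongr with s' _
    · exact hp0 _ _ _ _
    · exact ih _ _

theorem dev_bound {S A : Type*} [Fintype S] [Fintype A] [Nonempty A] [DecidableEq A]
    (H : ℕ) (r : ℕ → S → A → ℝ) (p : ℕ → S → A → S → ℝ)
    (hp0 : ∀ h s a s', 0 ≤ p h s a s')
    (πstar : ℕ → S → A) (Δmin : ℝ) (π : ℕ → S → A)
    (hgap : ∀ h, 1 ≤ h → h ≤ H → ∀ s a, a ≠ πstar h s → Δmin ≤ gap H r p h s a) (t : ℕ) :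
    ∀ n j s, t ≤ n → 1 ≤ j → j + n = H + 1 →
      Δmin * devAux p π πstar t j s ≤ VstarAux r p n j s - VpiAux r p π n j s := by
  induction t with
  | zero =>
    intro n j s _ _ _
    have := VpiAux_le_VstarAux r p hp0 π n j s
    simp only [devAux]
    linarith
  | succ t ih =>
    intro n j s htn hj hjn
    obtain ⟨m, rfl⟩ : ∃ m, n = m + 1 := ⟨n - 1, by omega⟩
    have hge := VstarAux_ge r p m j s (π j s)
    rw [VpiAux, devAux]
    split_ifs with hd
    · have hg := hgap j hj (by omega) s (π j s) hd
      unfold gap Qstar Vstar at hg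
      rw [show H + 1 - j = m + 1 by omega, show H + 1 - (j + 1) = m by omega] at hg
      have hle : ∑ s' : S, p j s (π j s) s' * VpiAux r p π m (j + 1) s'
          ≤ ∑ s' : S, p j s (π j s) s' * VstarAux r p m (j + 1) s' := by
        gcongr with s' _
        · exact hp0 _ _ _ _
        · exact VpiAux_le_VstarAux r p hp0 π m _ _
      linarith
    · have hle : ∑ s' : S, p j s (π j s) s' * (Δmin * devAux p π πstar t (j + 1) s')
          ≤ ∑ s' : S, p j s (π j s) s' *
            (VstarAux r p m (j + 1) s' - VpiAux r p π m (j + 1) s') := by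
        gcongr with s' _
        · exact hp0 _ _ _ _
        · exact ih m (j + 1) s' (by omega) (by omega) (by omega)
      simp only [mul_sub, Finset.sum_sub_distrib, mul_left_comm _ Δmin] at hle
      rw [← Finset.mul_sum] at hle
      linarith

theorem stmt5
    {S A : Type*} [Fintype S] [Fintype A] [Nonempty A] [DecidableEq A]
    (H : ℕ) (hH : 1 ≤ H)
    (r : ℕ → S → A → ℝ) (p : ℕ → S → A → S → ℝ)
    (hp0 : ∀ h s a s', 0 ≤ p h s a s') (hp1 : ∀ h s a, ∑ s' : S, p h s a s' = 1)
    (μ : S → ℝ) (hμ0 : ∀ s, 0 ≤ μ s) (hμ1 : ∑ s : S, μ s = 1)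
    -- π* is the unique optimal policy: at every state the optimal action is
    -- unique and given by π*
    (πstar : ℕ → S → A)
    (hunique : ∀ h, 1 ≤ h → h ≤ H → ∀ s a, a ≠ πstar h s →
        Qstar H r p h s a < Qstar H r p h s (πstar h s))
    -- Δ_min is the minimum positive gap (well defined: the set of positive
    -- gaps is nonempty and Δ_min is its least element, hence attained)
    (Δmin : ℝ)
    (hΔmin : IsLeast
        {x : ℝ | 0 < x ∧ ∃ h ∈ Finset.Icc 1 H, ∃ s : S, ∃ a : A,
          gap H r p h s a = x} Δmin) :
    ∀ π : ℕ → S → A, ∀ h, 1 ≤ h → h ≤ H →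
      -- P_π(∃ j ∈ [1,h] : a_j ≠ π*_j(s_j)), with s₁ ∼ μ
      ∑ s : S, μ s * devAux p π πstar h 1 s
        ≤ (1 / Δmin) * ∑ s : S, μ s * (Vstar H r p 1 s - Vpi H r p π 1 s) := by
  intro π h h1 hH'
  have hΔ : 0 < Δmin := hΔmin.1.1
  have hgap : ∀ h, 1 ≤ h → h ≤ H → ∀ s a, a ≠ πstar h s → Δmin ≤ gap H r p h s a := by
    intro j hj1 hjH s a ha
    refine hΔmin.2 ⟨?_, j, Finset.mem_Icc.2 ⟨hj1, hjH⟩, s, a, rfl⟩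
    have h2 := hunique j hj1 hjH s a ha
    have h3 : Qstar H r p j s (πstar j s) ≤ Vstar H r p j s := by
      have := VstarAux_ge r p (H - j) j s (πstar j s)
      unfold Qstar Vstar
      rw [show H + 1 - j = H - j + 1 by omega, show H + 1 - (j + 1) = H - j by omega]
      exact this
    unfold gap
    linarith
  rw [one_div, ← div_eq_inv_mul, le_div_iff₀' hΔ, Finset.mul_sum]
  refine Finset.sum_le_sum fun s _ => ?_
  rw [mul_left_comm]
  refine mul_le_mul_of_nonneg_left ?_ (hμ0 s)
  exact dev_bound H r p hp0 πstar Δmin π hgap h _ 1 s (by omega) le_rfl (by omega)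
end

section
/- Let M ∈ ℝ^{d×d} be a nonzero symmetric positive semidefinite matrix all of whose eigenvalues are at most 1, and let λ⁺ denote its smallest nonzero eigenvalue. Let k > 0 and c < 0 be real numbers with kλ⁺ + c > 0. Then the matrix B := kM + c I_d is invertible, and for every unit vector x lying in the column space of M, √(xᵀ B^{-1} x) ≤ (k + c) / (kλ⁺ + c)^{3/2}. -/
/-!
STATEMENT 6: for a nonzero symmetric PSD matrix `M` with eigenvalues ≤ 1 and
smallest nonzero eigenvalue `λ⁺`, and reals `k > 0`, `c < 0` with `kλ⁺ + c > 0`,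
the matrix `B = kM + cI` is invertible and every unit vector `x` in the column
space of `M` satisfies `√(xᵀ B⁻¹ x) ≤ (k + c)/(kλ⁺ + c)^{3/2}`.
-/

open Matrix

theorem stmt6_spec {d : ℕ} (M : Matrix (Fin d) (Fin d) ℝ) (hM : M.IsHermitian) :
    ∃ U : Matrix (Fin d) (Fin d) ℝ, Uᵀ * U = 1 ∧ U * Uᵀ = 1 ∧
      M = U * diagonal hM.eigenvalues * Uᵀ := by
  refine ⟨hM.eigenvectorUnitary, ?_, ?_, ?_⟩
  · have := Unitary.coe_star_mul_self hM.eigenvectorUnitary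
    simpa [star_eq_conjTranspose] using this
  · have := Unitary.coe_mul_star_self hM.eigenvectorUnitary
    simpa [star_eq_conjTranspose] using this
  · have := hM.spectral_theorem
    rw [Unitary.conjStarAlgAut_apply] at this
    simpa [star_eq_conjTranspose, Function.comp_def] using this

theorem stmt6 {d : ℕ} (M : Matrix (Fin d) (Fin d) ℝ)
    (hM : M.PosSemidef) (hM0 : M ≠ 0)
    (heig : ∀ i, hM.1.eigenvalues i ≤ 1)
    (lam : ℝ)
    -- `lam` is the smallest nonzero eigenvalue of `M`
    (hlam : IsLeast {x : ℝ | x ≠ 0 ∧ ∃ i, hM.1.eigenvalues i = x} lam)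
    (k c : ℝ) (hk : 0 < k) (hc : c < 0) (hkc : 0 < k * lam + c) :
    IsUnit (k • M + c • (1 : Matrix (Fin d) (Fin d) ℝ))
    ∧ ∀ x : Fin d → ℝ, x ⬝ᵥ x = 1 → x ∈ LinearMap.range M.mulVecLin →
        Real.sqrt (x ⬝ᵥ (k • M + c • (1 : Matrix (Fin d) (Fin d) ℝ))⁻¹.mulVec x)
          ≤ (k + c) / (k * lam + c) ^ ((3 : ℝ) / 2) := by
  obtain ⟨U, h1, h2, hU⟩ := stmt6_spec M hM.1
  set e := hM.1.eigenvalues with he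
  have hge : ∀ i, e i ≠ 0 → lam ≤ e i := fun i hi => hlam.2 ⟨hi, i, rfl⟩
  have hlam1 : lam ≤ 1 := by
    obtain ⟨_, i, hi⟩ := hlam.1
    rw [← hi]; exact heig i
  have hpos : ∀ i, e i ≠ 0 → k * lam + c ≤ k * e i + c := fun i hi => by
    have := mul_le_mul_of_nonneg_left (hge i hi) hk.le
    linarith
  have hne : ∀ i, k * e i + c ≠ 0 := fun i => by
    by_cases hi : e i = 0
    · rw [hi]; simpa using hc.ne
    · exact (hkc.trans_le (hpos i hi)).ne'
  have hB : k • M + c • (1 : Matrix (Fin d) (Fin d) ℝ)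
      = U * diagonal (fun i => k * e i + c) * Uᵀ := by
    have hd : diagonal (fun i => k * e i + c)
        = k • diagonal e + c • (1 : Matrix (Fin d) (Fin d) ℝ) := by
      ext i j
      by_cases hij : i = j
      · subst hij; simp
      · simp [hij]
    rw [hd, hU]
    simp [mul_add, add_mul, h2]
  have hinv : (k • M + c • (1 : Matrix (Fin d) (Fin d) ℝ)) *
      (U * diagonal (fun i => (k * e i + c)⁻¹) * Uᵀ) = 1 := by
    have hd : diagonal (fun i => k * e i + c) * diagonal (fun i => (k * e i + c)⁻¹)
        = (1 : Matrix (Fin d) (Fin d) ℝ) := by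
      rw [diagonal_mul_diagonal, ← diagonal_one]
      congr 1
      ext i
      exact mul_inv_cancel₀ (hne i)
    rw [hB]
    calc _ = U * diagonal (fun i => k * e i + c) * (Uᵀ * U) *
          diagonal (fun i => (k * e i + c)⁻¹) * Uᵀ := by simp only [Matrix.mul_assoc]
      _ = U * (diagonal (fun i => k * e i + c) * diagonal (fun i => (k * e i + c)⁻¹)) * Uᵀ := by
          rw [h1, Matrix.mul_one]; simp only [Matrix.mul_assoc]
      _ = 1 := by rw [hd, Matrix.mul_one, h2]
  refine ⟨IsUnit.of_mul_eq_one _ hinv, ?_⟩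
  intro x hx hxr
  obtain ⟨z, hz⟩ := hxr
  rw [mulVecLin_apply] at hz
  rw [inv_eq_right_inv hinv]
  have hy0 : ∀ i, e i = 0 → (Uᵀ *ᵥ x) i = 0 := by
    intro i hi
    have : Uᵀ *ᵥ x = diagonal e *ᵥ (Uᵀ *ᵥ z) := by
      rw [← hz, hU, mulVec_mulVec, mulVec_mulVec]
      congr 1
      rw [Matrix.mul_assoc U, ← Matrix.mul_assoc Uᵀ, h1, Matrix.one_mul]
    rw [this, mulVec_diagonal, hi, zero_mul]
  have key : ∀ v : Fin d → ℝ, x ⬝ᵥ (U *ᵥ v) = (Uᵀ *ᵥ x) ⬝ᵥ v := fun v => by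
    rw [dotProduct_mulVec, mulVec_transpose]
  have hyn : (Uᵀ *ᵥ x) ⬝ᵥ (Uᵀ *ᵥ x) = 1 := by
    rw [← key, mulVec_mulVec, h2, one_mulVec, hx]
  have hval : x ⬝ᵥ ((U * diagonal (fun i => (k * e i + c)⁻¹) * Uᵀ) *ᵥ x)
      ≤ (k * lam + c)⁻¹ := by
    rw [← mulVec_mulVec, ← mulVec_mulVec, key]
    generalize Uᵀ *ᵥ x = y at *
    calc _ ≤ ∑ i, (k * lam + c)⁻¹ * (y i * y i) := by
          refine Finset.sum_le_sum fun i _ => ?_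
          rw [mulVec_diagonal]
          by_cases hi : e i = 0
          · simp [hy0 i hi]
          · have := mul_le_mul_of_nonneg_right (inv_anti₀ hkc (hpos i hi)) (mul_self_nonneg (y i))
            linarith
      _ = (k * lam + c)⁻¹ := by
          rw [← Finset.mul_sum]
          change _ * (y ⬝ᵥ y) = _
          rw [hyn, mul_one]
  set a := k * lam + c with ha
  have hak : a ≤ k + c := by nlinarith
  have hp : a ^ ((3 : ℝ) / 2) = a * √a := by
    rw [Real.sqrt_eq_rpow, show (3 : ℝ) / 2 = 1 + 1 / 2 by norm_num, Real.rpow_add hkc,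
      Real.rpow_one]
  refine (Real.sqrt_le_sqrt hval).trans ?_
  have hs : 0 < √a := Real.sqrt_pos.mpr hkc
  rw [hp, Real.sqrt_inv, le_div_iff₀ (mul_pos hkc hs)]
  calc (√a)⁻¹ * (a * √a) = a := by field_simp
    _ ≤ k + c := hak
end

section
/- Let S be a nonempty set, A a nonempty finite set, and let φ_1,…,φ_N : S × A → ℝ^d be feature maps with ‖φ_j(s,a)‖₂ ≤ 1 for all j ∈ [N] and (s,a) ∈ S × A. Fix constants H > 0, L > 0, B > 0, λ > 0. Let 𝒱 be the class of functions V : S → ℝ of the parametric form V(s) = min( min_{j∈[N]} max_{a∈A} [ ⟨w_j, φ_j(s,a)⟩ + β √(φ_j(s,a)ᵀ Λ_j^{-1} φ_j(s,a)) ] , H ), where the parameters satisfy ‖w_j‖₂ ≤ L for all j, β ∈ [0, B], and each Λ_j is a symmetric positive definite d×d matrix whose minimum eigenvalue is at least λ. For ε > 0, let 𝒩_ε be the ε-covering number of 𝒱 with respect to the distance dist(V, V') = sup_{s∈S} |V(s) − V'(s)|, i.e., the minimal cardinality of a set 𝒞 of functions S → ℝ such that every V ∈ 𝒱 satisfies dist(V,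 V') ≤ ε for some V' ∈ 𝒞. Then log 𝒩_ε ≤ N ( d log(1 + 4L/ε) + d² log(1 + 8 d^{1/2} B² / (λ ε²)) ). -/
/-!
STATEMENT 7: covering-number bound for the LSVI-LEADER optimistic value
function class: `log 𝒩_ε ≤ N (d log(1 + 4L/ε) + d² log(1 + 8√d B²/(λ ε²)))`.
(The bound on the minimal cardinality `𝒩_ε` is expressed by exhibiting an
ε-cover `C` with `log |C|` at most the claimed bound.)
-/

open Finset Matrix

/-- The parametric optimistic value function
`V(s) = min( min_j max_a [⟨w_j, φ_j(s,a)⟩ + β √(φ_j(s,a)ᵀ Λ_j⁻¹ φ_j(s,a))], H )`. -/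
noncomputable def Vform {S A : Type*} [Fintype A] [Nonempty A] {d N : ℕ} [NeZero N]
    (Hc : ℝ) (φ : Fin N → S × A → Fin d → ℝ)
    (w : Fin N → Fin d → ℝ) (β : ℝ) (Λ : Fin N → Matrix (Fin d) (Fin d) ℝ)
    (s : S) : ℝ :=
  min
    (Finset.univ.inf' Finset.univ_nonempty fun j : Fin N =>
      Finset.univ.sup' Finset.univ_nonempty fun a : A =>
        w j ⬝ᵥ φ j (s, a)
          + β * Real.sqrt (φ j (s, a) ⬝ᵥ (Λ j)⁻¹.mulVec (φ j (s, a))))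
    Hc

open MeasureTheory in
theorem card_sep_aux {E : Type*} [NormedAddCommGroup E] [NormedSpace ℝ E] [FiniteDimensional ℝ E]
    (R r : ℝ) (hR : 0 ≤ R) (hr : 0 < r) (s : Finset E) (hs : ∀ c ∈ s, ‖c‖ ≤ R)
    (h : ∀ c ∈ s, ∀ d ∈ s, c ≠ d → r ≤ ‖c - d‖) :
    (s.card : ℝ) ≤ (1 + 2 * R / r) ^ Module.finrank ℝ E := by
  borelize E
  let μ : Measure E := Measure.addHaar
  set δ : ℝ := r / 2 with hδ
  set ρ : ℝ := R + r / 2 with hρ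
  have δpos : 0 < δ := by positivity
  have ρpos : 0 < ρ := by positivity
  set A := ⋃ c ∈ s, Metric.ball (c : E) δ with hA
  have D : Set.Pairwise (s : Set E) (Function.onFun Disjoint fun c => Metric.ball (c : E) δ) := by
    rintro c hc d hd hcd
    apply Metric.ball_disjoint_ball
    rw [dist_eq_norm]
    have := h c hc d hd hcd
    linarith
  have A_subset : A ⊆ Metric.ball (0 : E) ρ := by
    refine Set.iUnion₂_subset fun x hx => ?_
    apply Metric.ball_subset_ball'
    rw [dist_zero_right]
    have := hs x hx
    linarith
  have I :
    (s.card : ENNReal) * ENNReal.ofReal (δ ^ Module.finrank ℝ E) * μ (Metric.ball 0 1) ≤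
      ENNReal.ofReal (ρ ^ Module.finrank ℝ E) * μ (Metric.ball 0 1) :=
    calc
      (s.card : ENNReal) * ENNReal.ofReal (δ ^ Module.finrank ℝ E) * μ (Metric.ball 0 1) = μ A := by
        rw [hA, measure_biUnion_finset D fun c _ => measurableSet_ball]
        simp only [μ.addHaar_ball_of_pos _ δpos]
        simp only [Finset.sum_const, nsmul_eq_mul, mul_assoc]
      _ ≤ μ (Metric.ball (0 : E) ρ) := measure_mono A_subset
      _ = ENNReal.ofReal (ρ ^ Module.finrank ℝ E) * μ (Metric.ball 0 1) := by
        simp only [μ.addHaar_ball_of_pos _ ρpos]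
  have J : (s.card : ENNReal) * ENNReal.ofReal (δ ^ Module.finrank ℝ E)
      ≤ ENNReal.ofReal (ρ ^ Module.finrank ℝ E) :=
    (ENNReal.mul_le_mul_iff_left (Metric.measure_ball_pos _ _ zero_lt_one).ne'
      measure_ball_lt_top.ne).1 I
  have K := ENNReal.toReal_le_of_le_ofReal (pow_nonneg ρpos.le _) J
  rw [ENNReal.toReal_mul, ENNReal.toReal_natCast, ENNReal.toReal_ofReal (by positivity)] at K
  have e : 1 + 2 * R / r = ρ / δ := by
    rw [hρ, hδ]; field_simp; ring
  rw [e, div_pow, le_div_iff₀ (by positivity)]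
  exact K

theorem cover_aux {E : Type*} [NormedAddCommGroup E] [NormedSpace ℝ E] [FiniteDimensional ℝ E]
    (R r : ℝ) (hR : 0 ≤ R) (hr : 0 < r) :
    ∃ s : Finset E, (∀ x : E, ‖x‖ ≤ R → ∃ y ∈ s, ‖x - y‖ ≤ r) ∧
      (s.card : ℝ) ≤ (1 + 2 * R / r) ^ Module.finrank ℝ E := by
  classical
  let P : ℕ → Prop := fun n => ∃ s : Finset E, s.card = n ∧ (∀ c ∈ s, ‖c‖ ≤ R) ∧
    (∀ c ∈ s, ∀ d ∈ s, c ≠ d → r ≤ ‖c - d‖)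
  let M := ⌊(1 + 2 * R / r) ^ Module.finrank ℝ E⌋₊
  have hP0 : P 0 := ⟨∅, by simp⟩
  have hbd : ∀ n, P n → n ≤ M := by
    rintro n ⟨s, rfl, h1, h2⟩
    exact Nat.le_floor (card_sep_aux R r hR hr s h1 h2)
  have hfind := Nat.findGreatest_spec (P := P) (Nat.zero_le M) hP0
  obtain ⟨s, hc, h1, h2⟩ := hfind
  refine ⟨s, ?_, card_sep_aux R r hR hr s h1 h2⟩
  intro x hx
  by_contra! hcon
  have hxs : x ∉ s := by
    intro hxs
    have := hcon x hxs
    simp at this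
    linarith
  have hP : P (s.card + 1) := by
    refine ⟨insert x s, Finset.card_insert_of_notMem hxs, ?_, ?_⟩
    · intro c hc
      rcases Finset.mem_insert.1 hc with rfl | hc
      · exact hx
      · exact h1 c hc
    · intro c hc d hd hcd
      rcases Finset.mem_insert.1 hc with rfl | hcs <;> rcases Finset.mem_insert.1 hd with rfl | hds
      · exact absurd rfl hcd
      · exact (hcon d hds).le
      · rw [norm_sub_rev]; exact (hcon c hcs).le
      · exact h2 c hcs d hds hcd
  have := Nat.le_findGreatest (P := P) (hbd _ hP) hP
  omega

theorem cover_fun {ι : Type*} [Fintype ι]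
    (R r : ℝ) (hR : 0 ≤ R) (hr : 0 < r) :
    ∃ s : Finset (ι → ℝ), (∀ x : ι → ℝ, ∑ i, x i ^ 2 ≤ R ^ 2 →
        ∃ y ∈ s, ∑ i, (x i - y i) ^ 2 ≤ r ^ 2) ∧
      (s.card : ℝ) ≤ (1 + 2 * R / r) ^ Fintype.card ι := by
  classical
  obtain ⟨s, h1, h2⟩ := cover_aux (E := EuclideanSpace ℝ ι) R r hR hr
  refine ⟨s.image (fun x i => x i), ?_, ?_⟩
  · intro x hx
    obtain ⟨y, hy, hxy⟩ := h1 (WithLp.toLp 2 x) (by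
      rw [EuclideanSpace.norm_eq]
      apply Real.sqrt_le_iff.2
      exact ⟨hR, by simpa using hx⟩)
    refine ⟨fun i => y i, Finset.mem_image_of_mem _ hy, ?_⟩
    rw [EuclideanSpace.norm_eq] at hxy
    have := (Real.sqrt_le_iff.1 hxy).2
    simpa using this
  · rw [finrank_euclideanSpace] at h2
    refine le_trans ?_ h2
    exact_mod_cast Finset.card_image_le

theorem sqrt_diff (x y : ℝ) (hx : 0 ≤ x) (e : ℝ) (he : 0 ≤ e) (h : |x - y| ≤ e ^ 2) :
    |Real.sqrt x - Real.sqrt y| ≤ e := by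
  have h' := abs_le.1 h
  have hsx := Real.sqrt_nonneg x
  have hsy := Real.sqrt_nonneg y
  rw [abs_le]
  constructor
  · have : Real.sqrt y ≤ Real.sqrt x + e := by
      apply Real.sqrt_le_iff.2
      refine ⟨by positivity, ?_⟩
      nlinarith [Real.sq_sqrt hx, mul_nonneg hsx he]
    linarith
  · have : Real.sqrt x ≤ Real.sqrt y + e := by
      apply Real.sqrt_le_iff.2
      refine ⟨by positivity, ?_⟩
      rcases le_total 0 y with hy | hy
      · nlinarith [Real.sq_sqrt hy, mul_nonneg hsy he]
      · nlinarith [mul_nonneg hsy he]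
    linarith

theorem inv_frob {d : ℕ} (Λ : Matrix (Fin d) (Fin d) ℝ) (lam : ℝ) (hlam : 0 < lam)
    (hΛ : Λ.PosDef) (h : (Λ - lam • (1 : Matrix (Fin d) (Fin d) ℝ)).PosSemidef) :
    ∑ p : Fin d × Fin d, (Λ⁻¹ p.1 p.2) ^ 2 ≤ d / lam ^ 2 := by
  rw [Fintype.sum_prod_type_right]
  have key : ∀ j, ∑ i, (Λ⁻¹ i j) ^ 2 ≤ 1 / lam ^ 2 := by
    intro j
    set x : Fin d → ℝ := fun i => Λ⁻¹ i j with hx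
    have hu : IsUnit Λ.det := (Matrix.isUnit_iff_isUnit_det _).1 hΛ.isUnit
    have hmul : Λ *ᵥ x = Pi.single j 1 := by
      have : x = Λ⁻¹ *ᵥ (Pi.single j 1) := by
        ext i; simp [hx]
      rw [this, Matrix.mulVec_mulVec, Matrix.mul_nonsing_inv _ hu, Matrix.one_mulVec]
    have hq := h.dotProduct_mulVec_nonneg x
    rw [Matrix.sub_mulVec, hmul, Matrix.smul_mulVec, Matrix.one_mulVec, dotProduct_sub,
      dotProduct_smul] at hq
    have hxx : x ⬝ᵥ x = ∑ i, x i ^ 2 := by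
      simp [dotProduct, pow_two]
    simp only [star_trivial, dotProduct_single, mul_one, smul_eq_mul, hxx] at hq
    have hj : x j ^ 2 ≤ ∑ i, x i ^ 2 :=
      Finset.single_le_sum (f := fun i => x i ^ 2) (fun i _ => sq_nonneg _) (Finset.mem_univ j)
    change ∑ i, x i ^ 2 ≤ _
    set T := ∑ i, x i ^ 2
    have hT : 0 ≤ T := le_trans (sq_nonneg _) hj
    rw [le_div_iff₀ (by positivity)]
    have h1 : (lam * T) ^ 2 ≤ T := by
      have h3 : lam * T ≤ x j := by linarith
      have h4 : 0 ≤ lam * T := by positivity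
      nlinarith
    rcases hT.eq_or_lt with h0 | h0
    · rw [← h0]; simp
    · have : T * (T * lam ^ 2) ≤ T * 1 := by nlinarith
      exact le_of_mul_le_mul_left this h0
  calc _ ≤ ∑ _j : Fin d, 1 / lam ^ 2 := Finset.sum_le_sum fun j _ => key j
    _ = _ := by simp; rfl

theorem quad_bound {d : ℕ} (M : Fin d × Fin d → ℝ) (v : Fin d → ℝ) (r : ℝ) (hr : 0 ≤ r)
    (hM : ∑ p, M p ^ 2 ≤ r ^ 2) (hv : v ⬝ᵥ v ≤ 1) :
    |∑ p : Fin d × Fin d, M p * (v p.1 * v p.2)| ≤ r := by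
  apply abs_le_of_sq_le_sq _ hr
  have h0 : 0 ≤ v ⬝ᵥ v := Finset.sum_nonneg fun i _ => mul_self_nonneg _
  have h2 : ∑ p : Fin d × Fin d, (v p.1 * v p.2) ^ 2 = (v ⬝ᵥ v) * (v ⬝ᵥ v) := by
    rw [Fintype.sum_prod_type, dotProduct, Finset.sum_mul_sum]
    refine Finset.sum_congr rfl fun i _ => Finset.sum_congr rfl fun j _ => by ring
  calc _ ≤ (∑ p, M p ^ 2) * ∑ p : Fin d × Fin d, (v p.1 * v p.2) ^ 2 :=
        Finset.sum_mul_sq_le_sq_mul_sq _ _ _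
    _ ≤ r ^ 2 * 1 := by
        rw [h2]
        apply mul_le_mul hM _ (by positivity) (by positivity)
        nlinarith
    _ = r ^ 2 := mul_one _

theorem lin_bound {d : ℕ} (x v : Fin d → ℝ) (r : ℝ) (hr : 0 ≤ r)
    (hM : ∑ p, x p ^ 2 ≤ r ^ 2) (hv : v ⬝ᵥ v ≤ 1) : |x ⬝ᵥ v| ≤ r := by
  apply abs_le_of_sq_le_sq _ hr
  have h0 : 0 ≤ v ⬝ᵥ v := Finset.sum_nonneg fun i _ => mul_self_nonneg _
  have h2 : ∑ p, (v p) ^ 2 = v ⬝ᵥ v := by simp [dotProduct, pow_two]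
  calc _ ≤ (∑ p, x p ^ 2) * ∑ p, (v p) ^ 2 :=
        Finset.sum_mul_sq_le_sq_mul_sq _ _ _
    _ ≤ r ^ 2 * 1 := by
        rw [h2]
        exact mul_le_mul hM hv h0 (by positivity)
    _ = r ^ 2 := mul_one _

theorem minmax_le {J A : Type*} [Fintype J] [Nonempty J] [Fintype A] [Nonempty A] (Hc ε : ℝ)
    (hε : 0 ≤ ε) (g g' : J → A → ℝ) (h : ∀ j a, g j a ≤ g' j a + ε) :
    min (Finset.univ.inf' Finset.univ_nonempty fun j : J =>
      Finset.univ.sup' Finset.univ_nonempty fun a : A => g j a) Hc ≤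
    min (Finset.univ.inf' Finset.univ_nonempty fun j : J =>
      Finset.univ.sup' Finset.univ_nonempty fun a : A => g' j a) Hc + ε := by
  rw [← sub_le_iff_le_add]
  apply le_min
  · apply Finset.le_inf'
    intro j _
    rw [sub_le_iff_le_add]
    refine (min_le_left _ _).trans ((Finset.inf'_le _ (Finset.mem_univ j)).trans ?_)
    apply Finset.sup'_le
    intro a _
    have h1 := Finset.le_sup' (fun a => g' j a) (Finset.mem_univ a)
    have h2 := h j a
    linarith
  · have := min_le_right (Finset.univ.inf' Finset.univ_nonempty fun j : J =>
      Finset.univ.sup' Finset.univ_nonempty fun a : A => g j a) Hc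
    linarith

theorem stmt7 {S A : Type*} [Nonempty S] [Fintype A] [Nonempty A]
    {d N : ℕ} [NeZero N]
    (φ : Fin N → S × A → Fin d → ℝ)
    (hφ : ∀ j sa, Real.sqrt (φ j sa ⬝ᵥ φ j sa) ≤ 1)
    (Hc L B lam : ℝ) (hHc : 0 < Hc) (hL : 0 < L) (hB : 0 < B) (hlam : 0 < lam)
    (ε : ℝ) (hε : 0 < ε)
    (𝒱 : Set (S → ℝ))
    (h𝒱 : 𝒱 = {V | ∃ (w : Fin N → Fin d → ℝ) (β : ℝ)
        (Λ : Fin N → Matrix (Fin d) (Fin d) ℝ),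
        (∀ j, Real.sqrt (w j ⬝ᵥ w j) ≤ L) ∧ 0 ≤ β ∧ β ≤ B
        ∧ (∀ j, (Λ j).PosDef
            ∧ (Λ j - lam • (1 : Matrix (Fin d) (Fin d) ℝ)).PosSemidef)
        ∧ V = Vform Hc φ w β Λ}) :
    ∃ C : Set (S → ℝ), C.Finite
      ∧ (∀ V ∈ 𝒱, ∃ V' ∈ C, ∀ s, |V s - V' s| ≤ ε)
      ∧ Real.log C.ncard
          ≤ N * (d * Real.log (1 + 4 * L / ε)
              + d ^ 2 * Real.log (1 + 8 * Real.sqrt d * B ^ 2 / (lam * ε ^ 2))) := by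
  classical
  subst h𝒱
  have hφ' : ∀ j sa, φ j sa ⬝ᵥ φ j sa ≤ 1 := by
    intro j sa
    have := (Real.sqrt_le_iff.1 (hφ j sa)).2
    simpa using this
  obtain ⟨sw, hw1, hw2⟩ := cover_fun (ι := Fin d) L (ε / 2) hL.le (by positivity)
  obtain ⟨sA, hA1, hA2⟩ := cover_fun (ι := Fin d × Fin d) (Real.sqrt d * B ^ 2 / lam)
    ((ε / 2) ^ 2) (by positivity) (by positivity)
  let G : (Fin N → Fin d → ℝ) × (Fin N → Fin d × Fin d → ℝ) → S → ℝ := fun q s =>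
    min
      (Finset.univ.inf' Finset.univ_nonempty fun j : Fin N =>
        Finset.univ.sup' Finset.univ_nonempty fun a : A =>
          q.1 j ⬝ᵥ φ j (s, a)
            + Real.sqrt (∑ p : Fin d × Fin d, q.2 j p * (φ j (s, a) p.1 * φ j (s, a) p.2)))
      Hc
  let F : Finset ((Fin N → Fin d → ℝ) × (Fin N → Fin d × Fin d → ℝ)) :=
    (Fintype.piFinset fun _ => sw) ×ˢ (Fintype.piFinset fun _ => sA)
  refine ⟨↑(F.image G), Finset.finite_toSet _, ?_, ?_⟩
  · rintro V ⟨w, β, Λ, hw, hβ0, hβB, hΛ, rfl⟩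
    have hwc : ∀ j, ∃ y ∈ sw, ∑ i, (w j i - y i) ^ 2 ≤ (ε / 2) ^ 2 := by
      intro j
      apply hw1
      have := (Real.sqrt_le_iff.1 (hw j)).2
      simpa [dotProduct, pow_two] using this
    have hAc : ∀ j, ∃ y ∈ sA, ∑ p : Fin d × Fin d, (β ^ 2 * (Λ j)⁻¹ p.1 p.2 - y p) ^ 2
        ≤ ((ε / 2) ^ 2) ^ 2 := by
      intro j
      apply hA1 (fun p => β ^ 2 * (Λ j)⁻¹ p.1 p.2)
      have h1 := inv_frob (Λ j) lam hlam (hΛ j).1 (hΛ j).2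
      have hb : β ^ 2 ≤ B ^ 2 := by gcongr
      simp only [mul_pow, ← Finset.mul_sum]
      calc _ ≤ (B ^ 2) ^ 2 * (d / lam ^ 2) := by
            apply mul_le_mul _ h1 (Finset.sum_nonneg fun i _ => sq_nonneg _) (by positivity)
            gcongr
        _ = _ := by
            rw [div_pow, mul_pow, Real.sq_sqrt (by positivity)]; ring
    choose y hy1 hy2 using hwc
    choose z hz1 hz2 using hAc
    refine ⟨G (y, z), ?_, ?_⟩
    · rw [Finset.mem_coe]
      apply Finset.mem_image_of_mem
      simp [F, hy1, hz1]
    · intro s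
      have key : ∀ j a, |(w j ⬝ᵥ φ j (s, a)
          + β * Real.sqrt (φ j (s, a) ⬝ᵥ (Λ j)⁻¹.mulVec (φ j (s, a))))
          - (y j ⬝ᵥ φ j (s, a)
            + Real.sqrt (∑ p : Fin d × Fin d, z j p * (φ j (s, a) p.1 * φ j (s, a) p.2)))|
          ≤ ε := by
        intro j a
        set v := φ j (s, a) with hv
        have hv1 : v ⬝ᵥ v ≤ 1 := hφ' j (s, a)
        have hlin : |(w j - y j) ⬝ᵥ v| ≤ ε / 2 :=
          lin_bound _ v _ (by positivity) (by simpa using hy2 j) hv1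
        have hquad := quad_bound (fun p => β ^ 2 * (Λ j)⁻¹ p.1 p.2 - z j p) v _
          (by positivity) (hz2 j) hv1
        have hpos : 0 ≤ v ⬝ᵥ (Λ j)⁻¹.mulVec v := by
          simpa using (hΛ j).1.inv.posSemidef.dotProduct_mulVec_nonneg v
        have heq : v ⬝ᵥ (Λ j)⁻¹.mulVec v
            = ∑ p : Fin d × Fin d, (Λ j)⁻¹ p.1 p.2 * (v p.1 * v p.2) := by
          rw [Fintype.sum_prod_type]
          simp only [dotProduct, mulVec, Finset.mul_sum]
          refine Finset.sum_congr rfl fun i _ => Finset.sum_congr rfl fun j _ => by ring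
        have hβs : β * Real.sqrt (v ⬝ᵥ (Λ j)⁻¹.mulVec v)
            = Real.sqrt (β ^ 2 * (v ⬝ᵥ (Λ j)⁻¹.mulVec v)) := by
          rw [Real.sqrt_mul (by positivity), Real.sqrt_sq hβ0]
        have hs := sqrt_diff (β ^ 2 * (v ⬝ᵥ (Λ j)⁻¹.mulVec v))
          (∑ p : Fin d × Fin d, z j p * (v p.1 * v p.2)) (by positivity) (ε / 2) (by positivity)
          (by
            rw [heq, Finset.mul_sum, ← Finset.sum_sub_distrib]
            refine le_trans (le_of_eq ?_) hquad
            congr 1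
            refine Finset.sum_congr rfl fun p _ => by ring)
        rw [hβs]
        rw [sub_dotProduct] at hlin
        have e1 := abs_le.1 hlin
        have e2 := abs_le.1 hs
        rw [abs_le]
        constructor <;> linarith [e1.1, e1.2, e2.1, e2.2]
      rw [abs_le]
      constructor
      · have := minmax_le Hc ε hε.le (fun j a => y j ⬝ᵥ φ j (s, a)
            + Real.sqrt (∑ p : Fin d × Fin d, z j p * (φ j (s, a) p.1 * φ j (s, a) p.2)))
          (fun j a => w j ⬝ᵥ φ j (s, a)
            + β * Real.sqrt (φ j (s, a) ⬝ᵥ (Λ j)⁻¹.mulVec (φ j (s, a))))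
          (fun j a => by have := (abs_le.1 (key j a)).1; linarith)
        change G (y, z) s ≤ Vform Hc φ w β Λ s + ε at this
        linarith
      · have := minmax_le Hc ε hε.le
          (fun j a => w j ⬝ᵥ φ j (s, a)
            + β * Real.sqrt (φ j (s, a) ⬝ᵥ (Λ j)⁻¹.mulVec (φ j (s, a))))
          (fun j a => y j ⬝ᵥ φ j (s, a)
            + Real.sqrt (∑ p : Fin d × Fin d, z j p * (φ j (s, a) p.1 * φ j (s, a) p.2)))
          (fun j a => by have := (abs_le.1 (key j a)).2; linarith)
        change Vform Hc φ w β Λ s ≤ G (y, z) s + ε at this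
        linarith
  · rw [Set.ncard_coe_finset]
    have hcard : ((F.image G).card : ℝ) ≤ ((1 + 4 * L / ε) ^ d
        * (1 + 8 * Real.sqrt d * B ^ 2 / (lam * ε ^ 2)) ^ (d ^ 2)) ^ N := by
      calc ((F.image G).card : ℝ) ≤ (F.card : ℝ) := by exact_mod_cast Finset.card_image_le
        _ = ((sw.card : ℝ) * sA.card) ^ N := by simp [F, mul_pow]
        _ ≤ _ := by
          have e1 : 1 + 2 * L / (ε / 2) = 1 + 4 * L / ε := by field_simp; ring
          have e2 : 1 + 2 * (Real.sqrt d * B ^ 2 / lam) / ((ε / 2) ^ 2)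
              = 1 + 8 * Real.sqrt d * B ^ 2 / (lam * ε ^ 2) := by field_simp; ring
          rw [e1, Fintype.card_fin] at hw2
          rw [e2, Fintype.card_prod, Fintype.card_fin, ← pow_two] at hA2
          gcongr
    have hp1 : 0 < 1 + 4 * L / ε := by positivity
    have hp2 : 0 < 1 + 8 * Real.sqrt d * B ^ 2 / (lam * ε ^ 2) := by positivity
    have hrhs : Real.log (((1 + 4 * L / ε) ^ d
        * (1 + 8 * Real.sqrt d * B ^ 2 / (lam * ε ^ 2)) ^ (d ^ 2)) ^ N)
        = N * (d * Real.log (1 + 4 * L / ε)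
              + d ^ 2 * Real.log (1 + 8 * Real.sqrt d * B ^ 2 / (lam * ε ^ 2))) := by
      rw [Real.log_pow, Real.log_mul (by positivity) (by positivity), Real.log_pow, Real.log_pow]
      push_cast
      ring
    rw [← hrhs]
    rcases Nat.eq_zero_or_pos (F.image G).card with h0 | h0
    · rw [h0]
      simp only [Nat.cast_zero, Real.log_zero]
      apply Real.log_nonneg
      have q1 : 1 ≤ 1 + 4 * L / ε := by
        have : 0 ≤ 4 * L / ε := by positivity
        linarith
      have q2 : 1 ≤ 1 + 8 * Real.sqrt d * B ^ 2 / (lam * ε ^ 2) := by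
        have : 0 ≤ 8 * Real.sqrt d * B ^ 2 / (lam * ε ^ 2) := by positivity
        linarith
      exact one_le_pow₀ (one_le_mul_of_one_le_of_one_le (one_le_pow₀ q1) (one_le_pow₀ q2))
    · exact Real.log_le_log (by exact_mod_cast h0) hcard
end

section
/- Consider a finite-horizon MDP with low-rank structure: there are feature maps φ_h : S × A → ℝ^d, vectors θ_h ∈ ℝ^d, and maps μ_h : S → ℝ^d such that r_h(s,a) = ⟨φ_h(s,a), θ_h⟩ and p_h(s'|s,a) = ⟨φ_h(s,a), μ_h(s')⟩ for all s, a, s', h. Then: (i) for every deterministic policy π and every h ∈ {1,…,H}, there exists θ^π_h ∈ ℝ^d such that Q^π_h(s,a) = ⟨φ_h(s,a), θ^π_h⟩ for all (s,a) ∈ S × A; and (ii) for every h ∈ {1,…,H}, there exists θ^⋆_h ∈ ℝ^d such that Q*_h(s,a) = ⟨φ_h(s,a), θ^⋆_h⟩ for all (s,a) ∈ S × A. -/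
/-!
STATEMENT 9: in a low-rank MDP (`r_h(s,a) = ⟨φ_h(s,a), θ_h⟩`,
`p_h(s'|s,a) = ⟨φ_h(s,a), μ_h(s')⟩`), the Q-function of every policy, and the
optimal Q-function, are linear in the features at every stage `h ∈ [1,H]`.
-/

open Finset Matrix

variable {S A : Type*}

section MDP
variable [Fintype S] [Fintype A] [Nonempty A]

noncomputable def Qpi (H : ℕ) (r : ℕ → S → A → ℝ) (p : ℕ → S → A → S → ℝ)
    (π : ℕ → S → A) (h : ℕ) (s : S) (a : A) : ℝ :=
  r h s a + ∑ s' : S, p h s a s' * Vpi H r p π (h + 1) s'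

end MDP

theorem stmt9
    {S A : Type*} [Fintype S] [Fintype A] [Nonempty A] {d : ℕ}
    (H : ℕ) (hH : 1 ≤ H)
    (r : ℕ → S → A → ℝ) (p : ℕ → S → A → S → ℝ)
    (hp0 : ∀ h s a s', 0 ≤ p h s a s') (hp1 : ∀ h s a, ∑ s' : S, p h s a s' = 1)
    -- low-rank structure
    (φ : ℕ → S → A → Fin d → ℝ) (θ : ℕ → Fin d → ℝ) (μvec : ℕ → S → Fin d → ℝ)
    (hr : ∀ h s a, r h s a = φ h s a ⬝ᵥ θ h)
    (hp : ∀ h s a s', p h s a s' = φ h s a ⬝ᵥ μvec h s') :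
    -- (i) every policy has a linear Q-function
    (∀ π : ℕ → S → A, ∀ h, 1 ≤ h → h ≤ H → ∃ θπ : Fin d → ℝ,
        ∀ s a, Qpi H r p π h s a = φ h s a ⬝ᵥ θπ)
    -- (ii) the optimal Q-function is linear
    ∧ (∀ h, 1 ≤ h → h ≤ H → ∃ θst : Fin d → ℝ,
        ∀ s a, Qstar H r p h s a = φ h s a ⬝ᵥ θst) := by
  have key : ∀ (V : S → ℝ) (h : ℕ) (s : S) (a : A),
      r h s a + ∑ s' : S, p h s a s' * V s'
        = φ h s a ⬝ᵥ (θ h + ∑ s' : S, V s' • μvec h s') := by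
    intro V h s a
    rw [dotProduct_add, dotProduct_sum, hr]
    congr 1
    refine Finset.sum_congr rfl fun s' _ => ?_
    rw [dotProduct_smul, hp, smul_eq_mul, mul_comm]
  exact ⟨fun π h _ _ => ⟨_, fun s a => key (Vpi H r p π (h + 1)) h s a⟩,
    fun h _ _ => ⟨_, fun s a => key (Vstar H r p (h + 1)) h s a⟩⟩
end

section
/- (Bretagnolle–Huber inequality) Let P and Q be probability measures on the same measurable space (Ω, ℱ) and let E ∈ ℱ be an arbitrary event. Then P(E) + Q(Eᶜ) ≥ (1/2) · exp(−KL(P, Q)). -/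
/-!
STATEMENT 14 (Bretagnolle–Huber inequality): for probability measures `P, Q`
on the same measurable space and any event `E`,
`P(E) + Q(Eᶜ) ≥ (1/2) exp(−KL(P,Q))`, with `exp(−∞) = 0`.
-/

open MeasureTheory
open scoped ENNReal

-- The Kullback–Leibler divergence `KL(P,Q) ∈ [0,∞]`:
-- `∫ log(dP/dQ) dP` if `P ≪ Q` (and the log-likelihood ratio is `P`-integrable,
-- otherwise the integral is `+∞`), and `+∞` if `P` is not absolutely continuous
-- with respect to `Q`.
open scoped Classical in
noncomputable def klDiv {Ω : Type*} [MeasurableSpace Ω]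
    (P Q : Measure Ω) : ℝ≥0∞ :=
  if P ≪ Q ∧ Integrable (llr P Q) P then ENNReal.ofReal (∫ x, llr P Q x ∂P)
  else ⊤

/-- `expNeg x = exp(−x)` for `x ∈ [0,∞]`, with `exp(−∞) = 0`. -/
noncomputable def expNeg (x : ℝ≥0∞) : ℝ :=
  if x = ⊤ then 0 else Real.exp (-x.toReal)

theorem set_aux {Ω : Type*} [MeasurableSpace Ω]
    (P Q : Measure Ω) [IsProbabilityMeasure P] [IsProbabilityMeasure Q]
    (hac : P ≪ Q) (hint : Integrable (llr P Q) P) (s : Set Ω) :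
    P.real s * Real.log (P.real s / Q.real s) ≤ ∫ x in s, llr P Q x ∂P := by
  rcases eq_or_ne (P s) 0 with h0 | h0
  · have : P.restrict s = 0 := Measure.restrict_eq_zero.2 h0
    simp [measureReal_def, h0, this]
  have hq0 : Q s ≠ 0 := fun h => h0 (hac h)
  have hp : 0 < P.real s := ENNReal.toReal_pos h0 (measure_ne_top _ _)
  have hq : 0 < Q.real s := ENNReal.toReal_pos hq0 (measure_ne_top _ _)
  set c := P.real s / Q.real s with hc
  have hcpos : 0 < c := by positivity
  have hD : Integrable (fun x => (Q.rnDeriv P x).toReal) P := Measure.integrable_toReal_rnDeriv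
  have hle : ∫ x in s, (Real.log c + 1 - c * (Q.rnDeriv P x).toReal) ∂P
      ≤ ∫ x in s, llr P Q x ∂P := by
    apply integral_mono_ae
    · exact ((integrable_const _).sub (hD.const_mul c)).integrableOn
    · exact hint.integrableOn
    · filter_upwards [ae_restrict_of_ae (exp_neg_llr hac)] with x hx
      rw [← hx]
      have h1 := Real.log_le_sub_one_of_pos (mul_pos hcpos (Real.exp_pos (-llr P Q x)))
      rw [Real.log_mul hcpos.ne' (Real.exp_pos _).ne', Real.log_exp] at h1
      linarith
  have h2 : ∫ x in s, (Q.rnDeriv P x).toReal ∂P ≤ Q.real s :=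
    Measure.setIntegral_toReal_rnDeriv_le (measure_ne_top _ _)
  rw [integral_sub (integrable_const _) (hD.const_mul c).integrableOn, integral_const,
    integral_const_mul] at hle
  simp only [measureReal_restrict_apply_univ, smul_eq_mul] at hle
  have h3 : c * Q.real s = P.real s := by rw [hc]; field_simp
  have h4 := mul_le_mul_of_nonneg_left h2 hcpos.le
  linarith

theorem real_aux (p q p' q' : ℝ) (hp : 0 ≤ p) (hq : 0 ≤ q) (hp' : 0 ≤ p') (hq' : 0 ≤ q')
    (h1 : p + p' = 1) (h2 : q + q' = 1) (h : q = 0 → p = 0) (h' : q' = 0 → p' = 0) :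
    Real.exp (-(p * Real.log (p / q) + p' * Real.log (p' / q'))) ≤ 2 * (p + q') := by
  rcases hp.eq_or_lt with rfl | hp0
  · have : p' = 1 := by linarith
    subst this
    have : 0 < q' := hq'.lt_of_ne (fun e => one_ne_zero (h' e.symm))
    simp [Real.exp_log this]
    linarith
  rcases hp'.eq_or_lt with rfl | hp0'
  · have : p = 1 := by linarith
    subst this
    have : 0 < q := hq.lt_of_ne (fun e => one_ne_zero (h e.symm))
    simp [Real.exp_log this]
    linarith
  have hq0 : 0 < q := hq.lt_of_ne (fun e => hp0.ne' (h e.symm))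
  have hq0' : 0 < q' := hq'.lt_of_ne (fun e => hp0'.ne' (h' e.symm))
  have key := convexOn_exp.2 (Set.mem_univ (-Real.log (p / q) / 2))
    (Set.mem_univ (-Real.log (p' / q') / 2)) hp hp' h1
  simp only [smul_eq_mul] at key
  have sq : ∀ a b : ℝ, 0 < a → 0 < b → (a * Real.exp (-Real.log (a / b) / 2)) ^ 2 = a * b := by
    intro a b ha hb
    rw [mul_pow, ← Real.exp_nat_mul]
    have : ((2 : ℕ) : ℝ) * (-Real.log (a / b) / 2) = -Real.log (a / b) := by push_cast; ring
    rw [this, Real.exp_neg, Real.exp_log (by positivity)]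
    field_simp
  have hA := sq p q hp0 hq0
  have hB := sq p' q' hp0' hq0'
  set A := p * Real.exp (-Real.log (p / q) / 2)
  set B := p' * Real.exp (-Real.log (p' / q') / 2)
  have e : Real.exp (-(p * Real.log (p / q) + p' * Real.log (p' / q')))
      = Real.exp (p * (-Real.log (p / q) / 2) + p' * (-Real.log (p' / q') / 2)) ^ 2 := by
    rw [← Real.exp_nat_mul]; congr 1; push_cast; ring
  rw [e]
  have h5 := pow_le_pow_left₀ (Real.exp_pos _).le key 2
  have h6 : p * q ≤ p := by nlinarith
  have h7 : p' * q' ≤ q' := by nlinarith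
  nlinarith [sq_nonneg (A - B)]

theorem stmt14 {Ω : Type*} [MeasurableSpace Ω]
    (P Q : Measure Ω) [IsProbabilityMeasure P] [IsProbabilityMeasure Q]
    (E : Set Ω) (hE : MeasurableSet E) :
    (1 / 2) * expNeg (klDiv P Q) ≤ (P E).toReal + (Q Eᶜ).toReal := by
  unfold expNeg
  split_ifs with htop
  · simp only [mul_zero]; positivity
  have hcond : P ≪ Q ∧ Integrable (llr P Q) P := by
    by_contra hn
    exact htop (by unfold klDiv; rw [if_neg hn])
  obtain ⟨hac, hint⟩ := hcond
  have hsum : ∫ x, llr P Q x ∂P = ∫ x in E, llr P Q x ∂P + ∫ x in Eᶜ, llr P Q x ∂P :=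
    (integral_add_compl hE hint).symm
  have hk : ∫ x, llr P Q x ∂P ≤ (klDiv P Q).toReal := by
    unfold klDiv
    rw [if_pos ⟨hac, hint⟩, ENNReal.toReal_ofReal']
    exact le_max_left _ _
  have hz : ∀ s : Set Ω, Q.real s = 0 → P.real s = 0 := by
    intro s hs
    rw [measureReal_eq_zero_iff] at hs ⊢
    exact hac hs
  have h1 := set_aux P Q hac hint E
  have h2 := set_aux P Q hac hint Eᶜ
  have h3 := real_aux (P.real E) (Q.real E) (P.real Eᶜ) (Q.real Eᶜ) measureReal_nonneg
    measureReal_nonneg measureReal_nonneg measureReal_nonneg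
    (probReal_add_probReal_compl hE) (probReal_add_probReal_compl hE) (hz E) (hz Eᶜ)
  have h4 : Real.exp (-(klDiv P Q).toReal) ≤ _ :=
    (Real.exp_le_exp.2 (by linarith)).trans h3
  simp only [measureReal_def] at h4
  linarith
end
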